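/- Let u : ℝ → ℝ → ℝ be a smooth function of (x,t) with u_x(x,t) ≠ 0 for all (x,t), satisfying the Schwarzian Korteweg-de Vries equation u_t = u_{xxx} - (3/2)·u_{xx}²/u_x. Then both h₁ := 1/u_x and h₂ := u²/u_x satisfy h_t = ∂_x[ h_{xx} - (3/2)·h_x²/h ] (wherever h ≠ 0), where ∂_x denotes the partial derivative with respect to x of the bracketed expression. -/

import Mathlib

/-- Total `x`-derivative of a function of `(x, t)`. -/
noncomputable def dx (f : ℝ → ℝ → ℝ) : ℝ → ℝ → ℝ := fun x t => deriv (fun y => f y t) x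

/-- Total `t`-derivative of a function of `(x, t)`. -/
noncomputable def dt (f : ℝ → ℝ → ℝ) : ℝ → ℝ → ℝ := fun x t => deriv (fun s => f x s) t

/-- The Schwarzian Korteweg-de Vries equation. -/
def SKdV (u : ℝ → ℝ → ℝ) : Prop :=
  ∀ x t, dt u x t =
    dx (dx (dx u)) x t - (3/2) * (dx (dx u) x t)^2 / dx u x t

/-- The `x`-differentiated Schwarzian KdV equation for a function `h`, wherever `h ≠ 0`. -/
def SKdVdiff (h : ℝ → ℝ → ℝ) : Prop :=
  ∀ x t, h x t ≠ 0 →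
    dt h x t = dx (fun x t => dx (dx h) x t - (3/2) * (dx h x t)^2 / h x t) x t

/-!
Let `ℓ = u_xx / u_x`. The Schwarzian KdV equation says `u_t = u_x S` with `S = ℓ_x - ℓ² / 2` the
Schwarzian derivative of `u`, and differentiating it in `x` gives `u_xt = u_x (ℓ_xx - ℓ³ / 2)`.

If `k = h_x / h` then the flux `h_xx - (3/2) h_x² / h` equals `h (k_x - k² / 2)`, and its
`x`-derivative is `h (k_xx - k³ / 2)`. For `h = φ² / u_x` with `φ = a + b u` one has
`k = 2 m - ℓ`, where `m = φ_x / φ` satisfies the Riccati equation `m_x = m (ℓ - m)`,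
while `h_t / h = 2 m S - (ℓ_xx - ℓ³ / 2)`. The claim is thus a polynomial identity in
`m, ℓ, ℓ_x, ℓ_xx`, and the two potentialisations are the cases `φ = 1` and `φ = u`.
-/

open Function Topology

section LogarithmicDerivatives

variable {x : ℝ}

theorem hasDerivAt_div_of_logDeriv {f g : ℝ → ℝ} {α β : ℝ} (hf : HasDerivAt f (f x * α) x)
    (hg : HasDerivAt g (g x * β) x) (hgx : g x ≠ 0) :
    HasDerivAt (fun y => f y / g y) (f x / g x * (α - β)) x := by
  refine (hf.fun_div hg hgx).congr_deriv ?_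
  field_simp

theorem hasDerivAt_sq_div_of_logDeriv {f g : ℝ → ℝ} {α β : ℝ} (hf : HasDerivAt f (f x * α) x)
    (hg : HasDerivAt g (g x * β) x) (hgx : g x ≠ 0) :
    HasDerivAt (fun y => f y ^ 2 / g y) (f x ^ 2 / g x * (2 * α - β)) x := by
  have hsq : HasDerivAt (fun y => f y ^ 2) (f x ^ 2 * (2 * α)) x :=
    (hf.fun_pow 2).congr_deriv (by ring)
  exact hasDerivAt_div_of_logDeriv hsq hg hgx

theorem deriv_deriv_sub_sq_div_of_logDeriv {h k : ℝ → ℝ} {k' : ℝ}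
    (hh : ∀ᶠ y in 𝓝 x, HasDerivAt h (h y * k y) y) (hk : HasDerivAt k k' x) :
    deriv (deriv h) x - (3/2) * (deriv h x)^2 / h x = h x * (k' - k x ^ 2 / 2) := by
  have hderiv : deriv h =ᶠ[𝓝 x] fun y => h y * k y := hh.mono fun y hy => hy.deriv
  rw [hderiv.deriv_eq, (hh.self_of_nhds.fun_mul hk).deriv, hderiv.eq_of_nhds]
  by_cases hx : h x = 0
  · simp [hx]
  · field_simp
    ring

theorem hasDerivAt_deriv_deriv_sub_sq_div_of_logDeriv {h k k' : ℝ → ℝ} {k'' : ℝ}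
    (hh : ∀ᶠ y in 𝓝 x, HasDerivAt h (h y * k y) y) (hk : ∀ᶠ y in 𝓝 x, HasDerivAt k (k' y) y)
    (hk' : HasDerivAt k' k'' x) :
    HasDerivAt (fun y => deriv (deriv h) y - (3/2) * (deriv h y)^2 / h y)
      (h x * (k'' - k x ^ 3 / 2)) x := by
  have hflux : (fun y => deriv (deriv h) y - (3/2) * (deriv h y)^2 / h y) =ᶠ[𝓝 x]
      fun y => h y * (k' y - k y ^ 2 / 2) := by
    filter_upwards [hh.eventually_nhds, hk] with y hhy hky
    exact deriv_deriv_sub_sq_div_of_logDeriv hhy hky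
  refine HasDerivAt.congr_of_eventuallyEq ?_ hflux
  have hprod := hh.self_of_nhds.fun_mul (hk'.fun_sub ((hk.self_of_nhds.fun_pow 2).div_const 2))
  exact hprod.congr_deriv (by ring)

end LogarithmicDerivatives

section PartialDerivatives

variable {f : ℝ → ℝ → ℝ} {x t : ℝ}

theorem hasDerivAt_fderiv_uncurry_fst (hf : DifferentiableAt ℝ (uncurry f) (x, t)) :
    HasDerivAt (fun y => f y t) (fderiv ℝ (uncurry f) (x, t) (1, 0)) x :=
  hf.hasFDerivAt.comp_hasDerivAt (f := fun y => (y, t)) x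
    ((hasDerivAt_id x).prodMk (hasDerivAt_const x t))

theorem hasDerivAt_fderiv_uncurry_snd (hf : DifferentiableAt ℝ (uncurry f) (x, t)) :
    HasDerivAt (fun s => f x s) (fderiv ℝ (uncurry f) (x, t) (0, 1)) t :=
  hf.hasFDerivAt.comp_hasDerivAt (f := fun s => (x, s)) t
    ((hasDerivAt_const t x).prodMk (hasDerivAt_id t))

theorem hasDerivAt_dx (hf : DifferentiableAt ℝ (uncurry f) (x, t)) :
    HasDerivAt (fun y => f y t) (dx f x t) x :=
  (hasDerivAt_fderiv_uncurry_fst hf).differentiableAt.hasDerivAt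

theorem hasDerivAt_dt (hf : DifferentiableAt ℝ (uncurry f) (x, t)) :
    HasDerivAt (fun s => f x s) (dt f x t) t :=
  (hasDerivAt_fderiv_uncurry_snd hf).differentiableAt.hasDerivAt

theorem uncurry_dx_eq_fderiv (hf : Differentiable ℝ (uncurry f)) :
    uncurry (dx f) = fun p => fderiv ℝ (uncurry f) p (1, 0) :=
  funext fun p => (hasDerivAt_fderiv_uncurry_fst (hf p)).deriv

theorem uncurry_dt_eq_fderiv (hf : Differentiable ℝ (uncurry f)) :
    uncurry (dt f) = fun p => fderiv ℝ (uncurry f) p (0, 1) :=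
  funext fun p => (hasDerivAt_fderiv_uncurry_snd (hf p)).deriv

theorem contDiff_uncurry_dx {m n : WithTop ℕ∞} (hf : ContDiff ℝ n (uncurry f))
    (hmn : m + 1 ≤ n) : ContDiff ℝ m (uncurry (dx f)) := by
  rw [uncurry_dx_eq_fderiv ((hf.of_le hmn).differentiable (by simp))]
  exact (hf.fderiv_right hmn).clm_apply contDiff_const

theorem dt_dx_comm (hf : ContDiff ℝ 2 (uncurry f)) : dt (dx f) = dx (dt f) := by
  have hdiff : Differentiable ℝ (uncurry f) := hf.differentiable (by simp)
  have hfderiv : Differentiable ℝ (fderiv ℝ (uncurry f)) :=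
    (hf.fderiv_right (m := 1) (by norm_num)).differentiable (by simp)
  have hdx : Differentiable ℝ (uncurry (dx f)) := by
    rw [uncurry_dx_eq_fderiv hdiff]
    fun_prop
  have hdt : Differentiable ℝ (uncurry (dt f)) := by
    rw [uncurry_dt_eq_fderiv hdiff]
    fun_prop
  have fderiv_apply (v w p : ℝ × ℝ) : fderiv ℝ (fun q => fderiv ℝ (uncurry f) q v) p w =
      fderiv ℝ (fderiv ℝ (uncurry f)) p w v := by
    simp [fderiv_clm_apply (hfderiv p) (differentiableAt_const v)]
  funext x t
  have hsymm : IsSymmSndFDerivAt ℝ (uncurry f) (x, t) :=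
    hf.contDiffAt.isSymmSndFDerivAt (by simp)
  calc dt (dx f) x t
    _ = fderiv ℝ (uncurry (dx f)) (x, t) (0, 1) := (hasDerivAt_fderiv_uncurry_snd (hdx _)).deriv
    _ = fderiv ℝ (fderiv ℝ (uncurry f)) (x, t) (0, 1) (1, 0) := by
      rw [uncurry_dx_eq_fderiv hdiff, fderiv_apply]
    _ = fderiv ℝ (fderiv ℝ (uncurry f)) (x, t) (1, 0) (0, 1) := hsymm.eq _ _
    _ = fderiv ℝ (uncurry (dt f)) (x, t) (1, 0) := by
      rw [uncurry_dt_eq_fderiv hdiff, fderiv_apply]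
    _ = dx (dt f) x t := (hasDerivAt_fderiv_uncurry_fst (hdt _)).deriv.symm

end PartialDerivatives

/-- The pre-Schwarzian derivative `ℓ = u_xx / u_x`, that is, the logarithmic `x`-derivative of
`u_x`, with the junk value `0` where `u_x = 0`. -/
noncomputable def preSchwarzian (u : ℝ → ℝ → ℝ) : ℝ → ℝ → ℝ :=
  fun x t => dx (dx u) x t / dx u x t

/-- The Schwarzian derivative of `u` in `x`, written as `ℓ_x - ℓ² / 2` in terms of the
pre-Schwarzian derivative `ℓ`, so that the Schwarzian KdV equation reads `u_t = u_x S`. -/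
noncomputable def schwarzian (u : ℝ → ℝ → ℝ) : ℝ → ℝ → ℝ :=
  fun x t => dx (preSchwarzian u) x t - preSchwarzian u x t ^ 2 / 2

/-- The logarithmic `x`-derivative `m = b u_x / (a + b u)` of `a + b u`, with the junk value `0`
where `a + b u = 0`. -/
noncomputable def affineLogDeriv (a b : ℝ) (u : ℝ → ℝ → ℝ) : ℝ → ℝ → ℝ :=
  fun x t => b * dx u x t / (a + b * u x t)

section SchwarzianKdV

variable {u : ℝ → ℝ → ℝ}

theorem contDiff_uncurry_preSchwarzian {m n : WithTop ℕ∞} (hu : ContDiff ℝ n (uncurry u))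
    (hmn : m + 1 + 1 ≤ n) (hux : ∀ x t, dx u x t ≠ 0) :
    ContDiff ℝ m (uncurry (preSchwarzian u)) :=
  have hdx : ContDiff ℝ (m + 1) (uncurry (dx u)) := contDiff_uncurry_dx hu hmn
  (contDiff_uncurry_dx hdx le_rfl).div (hdx.of_le le_self_add) fun p => hux p.1 p.2

theorem hasDerivAt_dx_mul_preSchwarzian (hu : ContDiff ℝ 2 (uncurry u))
    (hux : ∀ x t, dx u x t ≠ 0) (x t : ℝ) :
    HasDerivAt (fun y => dx u y t) (dx u x t * preSchwarzian u x t) x := by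
  have hdx : ContDiff ℝ 1 (uncurry (dx u)) := contDiff_uncurry_dx hu (by norm_num)
  refine (hasDerivAt_dx (hdx.differentiable (by simp) (x, t))).congr_deriv ?_
  rw [preSchwarzian, mul_div_cancel₀ _ (hux x t)]

theorem hasDerivAt_preSchwarzian (hu : ContDiff ℝ 3 (uncurry u)) (hux : ∀ x t, dx u x t ≠ 0)
    (x t : ℝ) : HasDerivAt (fun y => preSchwarzian u y t) (dx (preSchwarzian u) x t) x :=
  have hℓ : ContDiff ℝ 1 (uncurry (preSchwarzian u)) :=
    contDiff_uncurry_preSchwarzian hu (by norm_num) hux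
  hasDerivAt_dx (hℓ.differentiable (by simp) (x, t))

theorem hasDerivAt_dx_preSchwarzian (hu : ContDiff ℝ 4 (uncurry u)) (hux : ∀ x t, dx u x t ≠ 0)
    (x t : ℝ) :
    HasDerivAt (fun y => dx (preSchwarzian u) y t) (dx (dx (preSchwarzian u)) x t) x :=
  have hℓ : ContDiff ℝ 2 (uncurry (preSchwarzian u)) :=
    contDiff_uncurry_preSchwarzian hu (by norm_num) hux
  have hℓx : ContDiff ℝ 1 (uncurry (dx (preSchwarzian u))) := contDiff_uncurry_dx hℓ (by norm_num)
  hasDerivAt_dx (hℓx.differentiable (by simp) (x, t))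

theorem SKdV.dt_eq_dx_mul_schwarzian (heq : SKdV u) (hu : ContDiff ℝ 3 (uncurry u))
    (hux : ∀ x t, dx u x t ≠ 0) (x t : ℝ) : dt u x t = dx u x t * schwarzian u x t :=
  (heq x t).trans <| deriv_deriv_sub_sq_div_of_logDeriv
    (.of_forall fun y => hasDerivAt_dx_mul_preSchwarzian (hu.of_le (by norm_num)) hux y t)
    (hasDerivAt_preSchwarzian hu hux x t)

theorem SKdV.dt_dx_eq (heq : SKdV u) (hu : ContDiff ℝ 4 (uncurry u))
    (hux : ∀ x t, dx u x t ≠ 0) (x t : ℝ) :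
    dt (dx u) x t =
      dx u x t * (dx (dx (preSchwarzian u)) x t - preSchwarzian u x t ^ 3 / 2) := by
  have hdt : dt u = fun x t => dx (dx (dx u)) x t - (3/2) * (dx (dx u) x t)^2 / dx u x t :=
    funext₂ heq
  rw [dt_dx_comm (hu.of_le (by norm_num)), hdt]
  exact (hasDerivAt_deriv_deriv_sub_sq_div_of_logDeriv
    (.of_forall fun y => hasDerivAt_dx_mul_preSchwarzian (hu.of_le (by norm_num)) hux y t)
    (.of_forall fun y => hasDerivAt_preSchwarzian (hu.of_le (by norm_num)) hux y t)
    (hasDerivAt_dx_preSchwarzian hu hux x t)).deriv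

variable {a b x t : ℝ}

theorem hasDerivAt_affine_mul_affineLogDeriv (hu : DifferentiableAt ℝ (uncurry u) (x, t))
    (hφ : a + b * u x t ≠ 0) :
    HasDerivAt (fun y => a + b * u y t) ((a + b * u x t) * affineLogDeriv a b u x t) x := by
  refine (((hasDerivAt_dx hu).const_mul b).const_add a).congr_deriv ?_
  rw [affineLogDeriv, mul_div_cancel₀ _ hφ]

theorem hasDerivAt_affineLogDeriv (hu : ContDiff ℝ 2 (uncurry u)) (hux : ∀ x t, dx u x t ≠ 0)
    (hφ : a + b * u x t ≠ 0) :
    HasDerivAt (fun y => affineLogDeriv a b u y t)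
      (affineLogDeriv a b u x t * (preSchwarzian u x t - affineLogDeriv a b u x t)) x := by
  have hnum : HasDerivAt (fun y => b * dx u y t) (b * dx u x t * preSchwarzian u x t) x :=
    ((hasDerivAt_dx_mul_preSchwarzian hu hux x t).const_mul b).congr_deriv (by ring)
  exact hasDerivAt_div_of_logDeriv hnum
    (hasDerivAt_affine_mul_affineLogDeriv (hu.differentiable (by simp) (x, t)) hφ) hφ

theorem SKdV.dt_affine_sq_div_dx (heq : SKdV u) (hu : ContDiff ℝ 4 (uncurry u))
    (hux : ∀ x t, dx u x t ≠ 0) (hφ : a + b * u x t ≠ 0) :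
    dt (fun x t => (a + b * u x t) ^ 2 / dx u x t) x t =
      (a + b * u x t) ^ 2 / dx u x t *
        (2 * (affineLogDeriv a b u x t * schwarzian u x t) -
          (dx (dx (preSchwarzian u)) x t - preSchwarzian u x t ^ 3 / 2)) := by
  have hφt : HasDerivAt (fun s => a + b * u x s)
      ((a + b * u x t) * (affineLogDeriv a b u x t * schwarzian u x t)) t := by
    have hut := hasDerivAt_dt (hu.differentiable (by simp) (x, t))
    refine ((hut.const_mul b).const_add a).congr_deriv ?_
    rw [heq.dt_eq_dx_mul_schwarzian (hu.of_le (by norm_num)) hux, affineLogDeriv]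
    field_simp
  have huxt : HasDerivAt (fun s => dx u x s)
      (dx u x t * (dx (dx (preSchwarzian u)) x t - preSchwarzian u x t ^ 3 / 2)) t := by
    have hdx : ContDiff ℝ 3 (uncurry (dx u)) := contDiff_uncurry_dx hu (by norm_num)
    rw [← heq.dt_dx_eq hu hux]
    exact hasDerivAt_dt (hdx.differentiable (by simp) (x, t))
  exact (hasDerivAt_sq_div_of_logDeriv hφt huxt (hux x t)).deriv

theorem hasDerivAt_flux_affine_sq_div_dx (hu : ContDiff ℝ 4 (uncurry u))
    (hux : ∀ x t, dx u x t ≠ 0) (hφ : a + b * u x t ≠ 0) :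
    let h : ℝ → ℝ := fun y => (a + b * u y t) ^ 2 / dx u y t
    HasDerivAt (fun y => deriv (deriv h) y - (3/2) * (deriv h y)^2 / h y)
      (h x * (2 * (affineLogDeriv a b u x t * schwarzian u x t) -
        (dx (dx (preSchwarzian u)) x t - preSchwarzian u x t ^ 3 / 2))) x := by
  intro h
  let m (y : ℝ) : ℝ := affineLogDeriv a b u y t
  let ℓ (y : ℝ) : ℝ := preSchwarzian u y t
  let ℓ' (y : ℝ) : ℝ := dx (preSchwarzian u) y t
  have hu2 : ContDiff ℝ 2 (uncurry u) := hu.of_le (by norm_num)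
  have hdiff : Differentiable ℝ (uncurry u) := hu.differentiable (by simp)
  have hℓ (y : ℝ) : HasDerivAt ℓ (ℓ' y) y :=
    hasDerivAt_preSchwarzian (hu.of_le (by norm_num)) hux y t
  have hℓ' : HasDerivAt ℓ' (dx (dx (preSchwarzian u)) x t) x :=
    hasDerivAt_dx_preSchwarzian hu hux x t
  have hφ_near : ∀ᶠ y in 𝓝 x, a + b * u y t ≠ 0 :=
    (((hasDerivAt_dx (hdiff (x, t))).continuousAt.const_mul b).const_add a).eventually_ne hφ
  have hm : ∀ᶠ y in 𝓝 x, HasDerivAt m (m y * (ℓ y - m y)) y :=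
    hφ_near.mono fun y hφy => hasDerivAt_affineLogDeriv hu2 hux hφy
  have hh : ∀ᶠ y in 𝓝 x, HasDerivAt h (h y * (2 * m y - ℓ y)) y :=
    hφ_near.mono fun y hφy => hasDerivAt_sq_div_of_logDeriv
      (hasDerivAt_affine_mul_affineLogDeriv (hdiff (y, t)) hφy)
      (hasDerivAt_dx_mul_preSchwarzian hu2 hux y t) (hux y t)
  have hk : ∀ᶠ y in 𝓝 x,
      HasDerivAt (fun y => 2 * m y - ℓ y) (2 * (m y * (ℓ y - m y)) - ℓ' y) y :=
    hm.mono fun y hmy => (hmy.const_mul 2).fun_sub (hℓ y)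
  have hmx : HasDerivAt m (m x * (ℓ x - m x)) x := hm.self_of_nhds
  have hk' := ((hmx.fun_mul ((hℓ x).fun_sub hmx)).const_mul 2).fun_sub hℓ'
  refine (hasDerivAt_deriv_deriv_sub_sq_div_of_logDeriv hh hk hk').congr_deriv ?_
  simp only [schwarzian, m, ℓ, ℓ']
  ring

theorem skdv_self_potentialisations_general (hu : ContDiff ℝ 4 (uncurry u))
    (hux : ∀ x t, dx u x t ≠ 0) (heq : SKdV u) (a b : ℝ) :
    SKdVdiff (fun x t => (a + b * u x t) ^ 2 / dx u x t) := by
  intro x t hne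
  have hφ : a + b * u x t ≠ 0 := fun hφ => hne (by simp [hφ])
  exact (heq.dt_affine_sq_div_dx hu hux hφ).trans
    (hasDerivAt_flux_affine_sq_div_dx hu hux hφ).deriv.symm

end SchwarzianKdV

/-- Both self-potentialisations `h₁ = 1/u_x` and `h₂ = u²/u_x` of the Schwarzian KdV
equation solve its `x`-differentiated form. -/
theorem skdv_self_potentialisations
    (u : ℝ → ℝ → ℝ)
    (hu : ContDiff ℝ (⊤ : ℕ∞) (fun p : ℝ × ℝ => u p.1 p.2))
    (hux : ∀ x t, dx u x t ≠ 0)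
    (heq : SKdV u) :
    SKdVdiff (fun x t => 1 / dx u x t) ∧
    SKdVdiff (fun x t => (u x t)^2 / dx u x t) := by
  have hu4 : ContDiff ℝ 4 (uncurry u) := contDiff_infty.1 hu 4
  exact ⟨by simpa using skdv_self_potentialisations_general hu4 hux heq 1 0,
    by simpa using skdv_self_potentialisations_general hu4 hux heq 0 1⟩
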